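/- The discriminant group D of A_4^∨(5) is the bouquet of 31 cyclic subgroups of order 5, of three types: D has exactly 31 subgroups of order 5; exactly 10 of them consist of the zero class together with two classes of minimal norm 2/5 and two classes of minimal norm 8/5; exactly 15 of them consist of the zero class together with two classes of minimal norm 4/5 and two classes of minimal norm 6/5; and exactly 6 of them consist of the zero class together with four classes of minimal norm 2. Here the minimal norm of a class c ∈ D is min{5⟨x,x⟩ : x ∈ (1/5)A_4, x + A_4^∨ = c}. -/

import Mathlib

/-!
Scaling by `5` identifies `(1/5)A₄` with the integer vectors `a` of sum zero, and `A₄^∨` with those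
whose coordinates are all congruent modulo `5` (`mem_A4dual_iff`). Hence
`a ↦ (a₁ - a₅, a₂ - a₅, a₃ - a₅) mod 5` induces an isomorphism `discEquiv : D ≃ 𝔽₅³`.

An integer is at least as large in absolute value as its balanced residue in `{-2, …, 2}`, so
`∑ aᵢ²` is bounded below by the least value `minSq` of `∑ res(aᵢ + k)²` over the shifts `k ∈ 𝔽₅`.
For each of the `125` classes this least value occurs at a shift whose balanced residues have sum
zero as integers (`exists_shift`), so it is attained, and the minimal norm of the class is
`minSq / 5` (`hasMinNorm_iff`).

Finally, the subgroups of order `5` are the `31` lines of `𝔽₅³`, each with a unique generator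
whose first nonzero coordinate is `1` (`ncard_subgroups`). What remains is a finite count over
these lines.
-/

open scoped BigOperators

noncomputable section

/-- The standard bilinear form `⟨x,y⟩ = ∑ xᵢ yᵢ` on `ℚ^5`. -/
def form (x y : Fin 5 → ℚ) : ℚ := ∑ i, x i * y i

/-- The root lattice `A₄ = {a ∈ ℤ^5 : a₁ + ⋯ + a₅ = 0}` inside `ℚ^5`. -/
def A4 : AddSubgroup (Fin 5 → ℚ) where
  carrier := {a | (∀ i, ∃ n : ℤ, a i = (n : ℚ)) ∧ ∑ i, a i = 0}
  zero_mem' := ⟨fun _ => ⟨0, by simp⟩, by simp⟩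
  add_mem' := by
    rintro a b ⟨ha, ha0⟩ ⟨hb, hb0⟩
    constructor
    · intro i
      obtain ⟨n, hn⟩ := ha i
      obtain ⟨m, hm⟩ := hb i
      exact ⟨n + m, by push_cast [Pi.add_apply, hn, hm]; ring⟩
    · simp [Pi.add_apply, Finset.sum_add_distrib, ha0, hb0]
  neg_mem' := by
    rintro a ⟨ha, ha0⟩
    constructor
    · intro i
      obtain ⟨n, hn⟩ := ha i
      exact ⟨-n, by push_cast [Pi.neg_apply, hn]; ring⟩
    · simp [Pi.neg_apply, Finset.sum_neg_distrib, ha0]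

/-- The fundamental weight `w₁ = (4,-1,-1,-1,-1)/5` of `A₄`. -/
def w1 : Fin 5 → ℚ := ![4/5, -1/5, -1/5, -1/5, -1/5]
/-- The fundamental weight `w₂ = (3,3,-2,-2,-2)/5` of `A₄`. -/
def w2 : Fin 5 → ℚ := ![3/5, 3/5, -2/5, -2/5, -2/5]
/-- The fundamental weight `w₃ = (2,2,2,-3,-3)/5` of `A₄`. -/
def w3 : Fin 5 → ℚ := ![2/5, 2/5, 2/5, -3/5, -3/5]
/-- The fundamental weight `w₄ = (1,1,1,1,-4)/5` of `A₄`. -/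
def w4 : Fin 5 → ℚ := ![1/5, 1/5, 1/5, 1/5, -4/5]

/-- The weight lattice `A₄^∨ = ℤw₁ + ℤw₂ + ℤw₃ + ℤw₄`.  The rescaled lattice `A₄^∨(5)`
is this group equipped with the bilinear form `5⟨·,·⟩`. -/
def A4dual : AddSubgroup (Fin 5 → ℚ) := AddSubgroup.closure {w1, w2, w3, w4}

/-- The dual lattice `(1/5)A₄ = {a/5 : a ∈ A₄}` of `A₄^∨(5)`. -/
def fifthA4 : AddSubgroup (Fin 5 → ℚ) :=
  A4.map (DistribMulAction.toAddMonoidHom (Fin 5 → ℚ) ((5 : ℚ)⁻¹))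

/-- The hyperplane `V = {x ∈ ℚ^5 : x₁ + ⋯ + x₅ = 0}`. -/
def V0 : Submodule ℚ (Fin 5 → ℚ) where
  carrier := {x | ∑ i, x i = 0}
  zero_mem' := by simp
  add_mem' := by
    intro a b ha hb
    simp only [Set.mem_setOf_eq] at *
    simp [Pi.add_apply, Finset.sum_add_distrib, ha, hb]
  smul_mem' := by
    intro c a ha
    simp only [Set.mem_setOf_eq] at *
    simp [Pi.smul_apply, ← Finset.mul_sum, ha]

/-- The discriminant group `D = ((1/5)A₄)/A₄^∨` of the lattice `A₄^∨(5)`. -/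
abbrev Disc := fifthA4 ⧸ (A4dual.addSubgroupOf fifthA4)

/-- A class `c` of the discriminant group `D` has minimal norm `q` if `q` is the
minimum of `5⟨x,x⟩` over the representatives `x ∈ (1/5)A₄` of `c`. -/
def HasMinNorm (c : Disc) (q : ℚ) : Prop :=
  (∃ x : fifthA4, (QuotientAddGroup.mk x : Disc) = c
      ∧ 5 * form (x : Fin 5 → ℚ) (x : Fin 5 → ℚ) = q) ∧
  ∀ x : fifthA4, (QuotientAddGroup.mk x : Disc) = c →
      q ≤ 5 * form (x : Fin 5 → ℚ) (x : Fin 5 → ℚ)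

/-! ### Shifts and balanced residues -/

/-- The model `𝔽₅³` of the discriminant group. -/
abbrev Model := ZMod 5 × ZMod 5 × ZMod 5

/-- The representative in `𝔽₅⁵` with sum zero and last coordinate zero of a class in `𝔽₅³`. -/
def lift5 (m : Model) : Fin 5 → ZMod 5 :=
  ![m.1, m.2.1, m.2.2, -(m.1 + m.2.1 + m.2.2), 0]

/-- The sum of the squares of the balanced residues of the representative shifted by `k`. -/
def shiftSq (m : Model) (k : ZMod 5) : ℤ := ∑ i, (lift5 m i + k).valMinAbs ^ 2

/-- Five times the minimal norm of a class: the least `shiftSq` over all shifts. -/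
def minSq (m : Model) : ℤ := Finset.univ.inf' Finset.univ_nonempty (shiftSq m)

/-- The least shift sum is reached at a shift whose balanced residues form a vector of `A₄`. -/
lemma exists_shift : ∀ m : Model, ∃ k : ZMod 5,
    ∑ i, (lift5 m i + k).valMinAbs = 0 ∧ shiftSq m k = minSq m := by
  decide +kernel

lemma valMinAbs_sq_le (a : ℤ) : (a : ZMod 5).valMinAbs ^ 2 ≤ a ^ 2 := by
  have h := ZMod.valMinAbs_mem_Ioc (a : ZMod 5)
  have h2 : (((a : ZMod 5).valMinAbs - a : ℤ) : ZMod 5) = 0 := by simp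
  obtain ⟨t, ht⟩ := (ZMod.intCast_zmod_eq_zero_iff_dvd _ 5).1 h2
  obtain ⟨h3, h4⟩ := h
  push_cast at h3 h4 ht
  generalize (a : ZMod 5).valMinAbs = v at *
  rw [sq_le_sq]
  rcases abs_cases v with h | h <;> rcases abs_cases a with h' | h' <;> omega

/-! ### The isomorphism of the discriminant group with `𝔽₅³` -/

lemma mem_fifthA4_iff (x : Fin 5 → ℚ) :
    x ∈ fifthA4 ↔ ∃ a : Fin 5 → ℤ, ∑ i, a i = 0 ∧ ∀ i, x i = a i / 5 := by
  constructor
  · rintro ⟨b, ⟨hb, hb0⟩, rfl⟩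
    choose a ha using hb
    refine ⟨a, ?_, fun i => ?_⟩
    · simp only [ha] at hb0
      exact_mod_cast hb0
    · simp [ha, div_eq_inv_mul]
  · rintro ⟨a, ha, hx⟩
    refine ⟨fun i => a i, ⟨fun i => ⟨a i, rfl⟩, ?_⟩, ?_⟩
    · beta_reduce
      exact_mod_cast ha
    ext i
    simp [hx, div_eq_inv_mul]

/-- A vector `a / 5` with `a ∈ A₄` has coordinates `(aᵢ - aᵢ₊₁) / 5` with respect to the fundamental
weights, so it lies in `A₄^∨` exactly when the `aᵢ` are congruent modulo `5`. -/
lemma mem_A4dual_iff (a : Fin 5 → ℤ) (ha : ∑ i, a i = 0) (x : Fin 5 → ℚ)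
    (hx : ∀ i, x i = a i / 5) : x ∈ A4dual ↔ ∀ i, (5 : ℤ) ∣ a i - a 4 := by
  constructor
  · intro h
    have key : ∀ i, ∃ n : ℤ, x i - x 4 = n := by
      clear hx ha
      induction h using AddSubgroup.closure_induction with
      | mem y hy =>
        simp only [Set.mem_insert_iff, Set.mem_singleton_iff] at hy
        intro i
        rcases hy with rfl | rfl | rfl | rfl <;> fin_cases i
        all_goals first
          | exact ⟨0, by decide +kernel⟩
          | exact ⟨1, by decide +kernel⟩
      | zero => exact fun i => ⟨0, by simp⟩
      | add y z _ _ hy hz =>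
        intro i
        obtain ⟨n, hn⟩ := hy i
        obtain ⟨k, hk⟩ := hz i
        exact ⟨n + k, by push_cast [Pi.add_apply, ← hn, ← hk]; ring⟩
      | neg y _ hy =>
        intro i
        obtain ⟨n, hn⟩ := hy i
        exact ⟨-n, by push_cast [Pi.neg_apply, ← hn]; ring⟩
    intro i
    obtain ⟨n, hn⟩ := key i
    refine ⟨n, ?_⟩
    rw [hx, hx] at hn
    have : (a i : ℚ) - a 4 = 5 * n := by linarith
    exact_mod_cast this
  · intro h
    obtain ⟨n0, h0⟩ := h 0
    obtain ⟨n1, h1⟩ := h 1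
    obtain ⟨n2, h2⟩ := h 2
    obtain ⟨n3, h3⟩ := h 3
    rw [Fin.sum_univ_five] at ha
    have e : x = (n0 - n1) • w1 + (n1 - n2) • w2 + (n2 - n3) • w3 + n3 • w4 := by
      have h4 : a 4 = -(n0 + n1 + n2 + n3) := by omega
      have h0' : a 0 = 5 * n0 + a 4 := by omega
      have h1' : a 1 = 5 * n1 + a 4 := by omega
      have h2' : a 2 = 5 * n2 + a 4 := by omega
      have h3' : a 3 = 5 * n3 + a 4 := by omega
      ext i
      rw [hx]
      fin_cases i <;>
        simp [w1, w2, w3, w4, h0', h1', h2', h3', h4] <;> ring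
    rw [e]
    have hw : ∀ w ∈ ({w1, w2, w3, w4} : Set (Fin 5 → ℚ)), w ∈ A4dual :=
      fun w hw => AddSubgroup.subset_closure hw
    exact add_mem (add_mem (add_mem (zsmul_mem (hw _ (by simp)) _) (zsmul_mem (hw _ (by simp)) _))
      (zsmul_mem (hw _ (by simp)) _)) (zsmul_mem (hw _ (by simp)) _)

/-- The reduction of the differences `5xᵢ - 5x₅`; on `(1/5)A₄` the `5xᵢ` are integers, so
taking numerators loses nothing. -/
def residues (x : Fin 5 → ℚ) : Model :=
  (((5 * x 0).num - (5 * x 4).num : ℤ), ((5 * x 1).num - (5 * x 4).num : ℤ),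
    ((5 * x 2).num - (5 * x 4).num : ℤ))

lemma residues_eq {x : Fin 5 → ℚ} {a : Fin 5 → ℤ} (hx : ∀ i, x i = a i / 5) :
    residues x = (((a 0 - a 4 : ℤ) : ZMod 5), ((a 1 - a 4 : ℤ) : ZMod 5),
      ((a 2 - a 4 : ℤ) : ZMod 5)) := by
  have h : ∀ i, (5 * x i).num = a i := fun i => by
    rw [hx, mul_div_cancel₀ _ (by norm_num : (5 : ℚ) ≠ 0), Rat.num_intCast]
  simp only [residues, h]

/-- Reduction of coordinate differences as a homomorphism `(1/5)A₄ → 𝔽₅³`. -/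
def residuesHom : fifthA4 →+ Model where
  toFun x := residues x
  map_zero' := by simp [residues]
  map_add' x y := by
    obtain ⟨a, -, ha⟩ := (mem_fifthA4_iff _).1 x.2
    obtain ⟨b, -, hb⟩ := (mem_fifthA4_iff _).1 y.2
    have hab : ∀ i, ((x + y : fifthA4) : Fin 5 → ℚ) i = ((a + b) i : ℤ) / 5 := fun i => by
      simp [ha, hb, add_div]
    rw [residues_eq ha, residues_eq hb, residues_eq hab]
    ext <;> simp <;> ring

lemma residues_eq_of_lift (m : Model) (k : ZMod 5) (a : Fin 5 → ℤ)
    (h : ∀ i, (a i : ZMod 5) = lift5 m i + k) (x : Fin 5 → ℚ) (hx : ∀ i, x i = a i / 5) :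
    residues x = m := by
  rw [residues_eq hx]
  ext <;> simp [h, lift5]

lemma residuesHom_surjective : Function.Surjective residuesHom := by
  intro m
  obtain ⟨k, hk, -⟩ := exists_shift m
  have hx := (mem_fifthA4_iff (fun i => ((lift5 m i + k).valMinAbs : ℚ) / 5)).2
    ⟨_, hk, fun i => rfl⟩
  exact ⟨⟨_, hx⟩, residues_eq_of_lift m k _ (fun i => by simp) _ fun i => rfl⟩

lemma ker_residuesHom : residuesHom.ker = A4dual.addSubgroupOf fifthA4 := by
  ext x
  obtain ⟨a, ha, hx⟩ := (mem_fifthA4_iff _).1 x.2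
  rw [AddMonoidHom.mem_ker, AddSubgroup.mem_addSubgroupOf, mem_A4dual_iff a ha _ hx]
  change residues x = 0 ↔ _
  rw [residues_eq hx]
  simp only [Prod.mk_eq_zero, ZMod.intCast_zmod_eq_zero_iff_dvd]
  rw [Fin.sum_univ_five] at ha
  push_cast
  constructor
  · rintro ⟨h0, h1, h2⟩ i
    fin_cases i <;> simp <;> omega
  · exact fun h => ⟨h 0, h 1, h 2⟩

/-- The isomorphism of the discriminant group with `𝔽₅³`. -/
def discEquiv : Disc ≃+ Model :=
  (QuotientAddGroup.quotientAddEquivOfEq ker_residuesHom.symm).trans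
    (QuotientAddGroup.quotientKerEquivOfSurjective _ residuesHom_surjective)

lemma discEquiv_mk (x : fifthA4) : discEquiv (QuotientAddGroup.mk x) = residues x := rfl

/-! ### Minimal norms -/

lemma norm_eq {x : Fin 5 → ℚ} {a : Fin 5 → ℤ} (hx : ∀ i, x i = a i / 5) :
    5 * form x x = ((∑ i, a i ^ 2 : ℤ) : ℚ) / 5 := by
  simp only [form, hx, Fin.sum_univ_five]
  push_cast
  ring

/-- A representative `a / 5` is compared with the shift `k = a₅`, which recovers `a` modulo `5`. -/
lemma minSq_le {x : fifthA4} {a : Fin 5 → ℤ} (ha : ∑ i, a i = 0)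
    (hx : ∀ i, (x : Fin 5 → ℚ) i = a i / 5) : minSq (residues x) ≤ ∑ i, a i ^ 2 := by
  refine (Finset.inf'_le _ (Finset.mem_univ (a 4 : ZMod 5))).trans ?_
  refine Finset.sum_le_sum fun i _ => ?_
  have key : lift5 (residues x) i + (a 4 : ZMod 5) = (a i : ZMod 5) := by
    rw [Fin.sum_univ_five] at ha
    have h3 : a 3 = -(a 0 + a 1 + a 2 + a 4) := by omega
    have h5 : (5 : ZMod 5) = 0 := rfl
    rw [residues_eq hx]
    fin_cases i <;> simp [lift5, h3]
    linear_combination (a 4 : ZMod 5) * h5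
  rw [key]
  exact valMinAbs_sq_le _

lemma hasMinNorm_minSq (c : Disc) : HasMinNorm c ((minSq (discEquiv c) : ℚ) / 5) := by
  constructor
  · obtain ⟨k, hk, hs⟩ := exists_shift (discEquiv c)
    have hx := (mem_fifthA4_iff (fun i => ((lift5 (discEquiv c) i + k).valMinAbs : ℚ) / 5)).2
      ⟨_, hk, fun i => rfl⟩
    refine ⟨⟨_, hx⟩, discEquiv.injective ?_, ?_⟩
    · exact residues_eq_of_lift (discEquiv c) k _ (fun i => by simp) _ fun i => rfl
    · rw [← hs]
      exact norm_eq fun i => rfl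
  · rintro x rfl
    obtain ⟨a, ha, hx⟩ := (mem_fifthA4_iff _).1 x.2
    rw [norm_eq hx, discEquiv_mk]
    have := minSq_le ha hx
    gcongr

lemma hasMinNorm_iff (c : Disc) (n : ℤ) (q : ℚ) (hq : q = n / 5) :
    HasMinNorm c q ↔ minSq (discEquiv c) = n := by
  have h0 := hasMinNorm_minSq c
  constructor
  · rintro ⟨⟨x, hx, hxq⟩, h⟩
    obtain ⟨⟨y, hy, hyq⟩, h'⟩ := h0
    have h1 := h y hy
    have h2 := h' x hx
    rw [hyq] at h1
    rw [hxq] at h2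
    have : (minSq (discEquiv c) : ℚ) = n := by linarith
    exact_mod_cast this
  · rintro rfl
    rwa [hq]

/-! ### Subgroups of order five -/

/-- The nonzero vectors of `𝔽₅³` whose first nonzero coordinate is `1`. -/
def reps : Finset Model :=
  Finset.univ.filter fun m => m.1 = 1 ∨ m.1 = 0 ∧ (m.2.1 = 1 ∨ m.2.1 = 0 ∧ m.2.2 = 1)

lemma exists_rep : ∀ m : Model, m ≠ 0 → ∃ r ∈ reps, ∃ k : ZMod 5, k • m = r := by
  decide +kernel

lemma rep_unique : ∀ r ∈ reps, ∀ k : ZMod 5, k • r ∈ reps → k • r = r := by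
  decide +kernel

/-- The five multiples of a vector of `𝔽₅³`. -/
def line (r : Model) : Finset Model := Finset.univ.image fun k : ZMod 5 => k • r

lemma card_line : ∀ r ∈ reps, (line r).card = 5 := by
  decide +kernel

lemma rep_ne_zero : ∀ r ∈ reps, r ≠ 0 := by
  decide +kernel

lemma mem_zmultiples_iff (r : Model) (c : Disc) :
    c ∈ AddSubgroup.zmultiples (discEquiv.symm r) ↔ discEquiv c ∈ line r := by
  simp only [line, Finset.mem_image, Finset.mem_univ, true_and, AddSubgroup.mem_zmultiples_iff]
  constructor
  · rintro ⟨n, rfl⟩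
    exact ⟨n, by rw [Int.cast_smul_eq_zsmul]; simp⟩
  · rintro ⟨k, hk⟩
    refine ⟨k.valMinAbs, discEquiv.injective ?_⟩
    rw [← hk, map_zsmul, AddEquiv.apply_symm_apply, ← Int.cast_smul_eq_zsmul (ZMod 5)]
    simp

lemma ncard_zmultiples (r : Model) (p : Model → Prop) [DecidablePred p] :
    Set.ncard {c : Disc | c ∈ AddSubgroup.zmultiples (discEquiv.symm r) ∧ p (discEquiv c)} =
      ((line r).filter p).card := by
  rw [← Set.ncard_coe_finset, ← Set.ncard_image_of_injective _ discEquiv.injective]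
  congr 1
  ext m
  obtain ⟨c, rfl⟩ := discEquiv.surjective m
  simp [mem_zmultiples_iff]

lemma card_zmultiples {r : Model} (hr : r ∈ reps) :
    Nat.card (AddSubgroup.zmultiples (discEquiv.symm r)) = 5 := by
  have := ncard_zmultiples r (fun _ => True)
  rw [Finset.filter_true, card_line r hr] at this
  simpa [← Nat.card_coe_set_eq] using this

/-- The subgroups of order `5` correspond to the normalized generators `reps`, since a subgroup of
prime order is generated by any of its nonzero elements. -/
lemma ncard_subgroups (P : AddSubgroup Disc → Prop) (p : Model → Prop) [DecidablePred p]
    (h : ∀ r ∈ reps, P (AddSubgroup.zmultiples (discEquiv.symm r)) ↔ p r) :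
    Set.ncard {H : AddSubgroup Disc | Nat.card H = 5 ∧ P H} = (reps.filter p).card := by
  have hinj : Set.InjOn (fun r => AddSubgroup.zmultiples (discEquiv.symm r))
      (reps.filter p : Finset Model) := by
    intro r hr s hs hrs
    simp only [Finset.coe_filter, Set.mem_ofPred_eq] at hr hs hrs
    have h1 : discEquiv.symm s ∈ AddSubgroup.zmultiples (discEquiv.symm r) := by
      rw [hrs]; exact AddSubgroup.mem_zmultiples _
    rw [mem_zmultiples_iff, AddEquiv.apply_symm_apply, line, Finset.mem_image] at h1
    obtain ⟨k, -, rfl⟩ := h1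
    exact (rep_unique r hr.1 k hs.1).symm
  rw [← Set.ncard_coe_finset, ← hinj.ncard_image]
  congr 1
  ext H
  simp only [Set.mem_ofPred_eq, Set.mem_image, Finset.coe_filter]
  constructor
  · rintro ⟨hH, hP⟩
    have hne : H ≠ ⊥ := by
      rintro rfl
      simp at hH
    obtain ⟨c, hc, hc0⟩ := H.bot_or_exists_ne_zero.resolve_left hne
    obtain ⟨r, hr, k, hk⟩ := exists_rep (discEquiv c) (by simpa using hc0)
    have hrH : discEquiv.symm r ∈ H := by
      have : discEquiv.symm r = k.valMinAbs • c := by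
        apply discEquiv.injective
        rw [map_zsmul, AddEquiv.apply_symm_apply, ← hk, ← Int.cast_smul_eq_zsmul (ZMod 5)]
        simp
      rw [this]
      exact zsmul_mem hc _
    have hfin : Finite H := Nat.finite_of_card_ne_zero (by omega)
    have hEq : AddSubgroup.zmultiples (discEquiv.symm r) = H :=
      AddSubgroup.eq_of_le_of_card_ge (by simpa using hrH) (by rw [hH, card_zmultiples hr])
    exact ⟨r, ⟨hr, (h r hr).1 (hEq ▸ hP)⟩, hEq⟩
  · rintro ⟨r, ⟨hr, hp⟩, rfl⟩
    exact ⟨card_zmultiples hr, (h r hr).2 hp⟩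

lemma ncard_minNorm (r : Model) (n : ℤ) (q : ℚ) (hq : q = n / 5) :
    Set.ncard {c : Disc | c ∈ AddSubgroup.zmultiples (discEquiv.symm r) ∧ HasMinNorm c q} =
      ((line r).filter fun m => minSq m = n).card := by
  simp only [hasMinNorm_iff _ n q hq]
  exact ncard_zmultiples r fun m => minSq m = n

/-- The discriminant group `D` of `A₄^∨(5)` is the bouquet of `31`
cyclic subgroups of order `5`: `10` of them contain two classes of minimal norm `2/5`
and two of minimal norm `8/5`; `15` of them contain two classes of minimal norm `4/5`
and two of minimal norm `6/5`; and `6` of them contain four classes of minimal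
norm `2`. -/
theorem disc_group_bouquet :
    Set.ncard {H : AddSubgroup Disc | Nat.card H = 5} = 31 ∧
    Set.ncard {H : AddSubgroup Disc | Nat.card H = 5 ∧
      Set.ncard {c : Disc | c ∈ H ∧ HasMinNorm c (2/5)} = 2 ∧
      Set.ncard {c : Disc | c ∈ H ∧ HasMinNorm c (8/5)} = 2} = 10 ∧
    Set.ncard {H : AddSubgroup Disc | Nat.card H = 5 ∧
      Set.ncard {c : Disc | c ∈ H ∧ HasMinNorm c (4/5)} = 2 ∧
      Set.ncard {c : Disc | c ∈ H ∧ HasMinNorm c (6/5)} = 2} = 15 ∧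
    Set.ncard {H : AddSubgroup Disc | Nat.card H = 5 ∧
      Set.ncard {c : Disc | c ∈ H ∧ HasMinNorm c 2} = 4} = 6 := by
  refine ⟨?_, ?_, ?_, ?_⟩
  · have h := ncard_subgroups (fun _ => True) (fun _ : Model => True) (fun _ _ => Iff.rfl)
    simp only [and_true] at h
    rw [h]
    decide +kernel
  · rw [ncard_subgroups _ (fun r => ((line r).filter fun m => minSq m = 2).card = 2 ∧
      ((line r).filter fun m => minSq m = 8).card = 2) fun r _ => by
        rw [ncard_minNorm r 2 (2/5) (by norm_num), ncard_minNorm r 8 (8/5) (by norm_num)]]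
    decide +kernel
  · rw [ncard_subgroups _ (fun r => ((line r).filter fun m => minSq m = 4).card = 2 ∧
      ((line r).filter fun m => minSq m = 6).card = 2) fun r _ => by
        rw [ncard_minNorm r 4 (4/5) (by norm_num), ncard_minNorm r 6 (6/5) (by norm_num)]]
    decide +kernel
  · rw [ncard_subgroups _ (fun r => ((line r).filter fun m => minSq m = 10).card = 4) fun r _ => by
        rw [ncard_minNorm r 10 2 (by norm_num)]]
    decide +kernel
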